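/- Aubin–Nitsche lemma: for every g ∈ H let φ_g ∈ V be the unique solution of the adjoint problem a(w, φ_g) = ⟨g, ι w⟩_H for all w ∈ V (which exists by the Lax–Milgram theorem applied to (v,w) ↦ a(w,v)). Then ‖ι(u − u_h)‖_H ≤ c₂ · ‖u − u_h‖_V · sup over g ∈ H with g ≠ 0 of ( (1/‖g‖_H) · inf over v_h ∈ V_h of ‖φ_g − v_h‖_V ). -/

import Mathlib

/-!
Test the dual problem for the datum `g = ι e` with the error `e = u - u_h` itself: this gives
`‖ι e‖² = a(e, φ g)`. Galerkin orthogonality lets one subtract any `v_h ∈ V_h` from `φ g`, so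
`‖ι e‖² ≤ c₂ ‖e‖ dist(φ g, V_h)`, and the distance is at most `‖ι e‖` times the supremum,
which is finite because coercivity gives `‖φ g‖ ≤ (‖ι‖ / c₁) ‖g‖`.
-/

open Metric

section DualApproximation

variable {V H : Type*} [NormedAddCommGroup H]

/-- The dual approximation constant `sup_{g ≠ 0} dist(φ g, W) / ‖g‖`: it measures how well the
solutions `φ g` of a dual problem with datum `g` are approximated from `W`. As a supremum in `ℝ` it
has the junk value `0` when the quotients are unbounded. -/
noncomputable def dualApproxConst [PseudoMetricSpace V] (φ : H → V) (W : Set V) : ℝ :=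
  sSup {r : ℝ | ∃ g : H, g ≠ 0 ∧ r = (1 / ‖g‖) * infDist (φ g) W}

theorem dualApproxConst_nonneg [PseudoMetricSpace V] (φ : H → V) (W : Set V) :
    0 ≤ dualApproxConst φ W := by
  refine Real.sSup_nonneg ?_
  rintro _ ⟨g, -, rfl⟩
  exact mul_nonneg (by positivity) infDist_nonneg

variable [SeminormedAddCommGroup V] {φ : H → V} {W : Set V} {K : ℝ}

theorem infDist_le_norm_of_zero_mem (hW : (0 : V) ∈ W) (z : V) : infDist z W ≤ ‖z‖ :=
  (infDist_le_dist_of_mem hW).trans_eq (dist_zero_right z)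

theorem infDist_le_dualApproxConst_mul_norm (hW : (0 : V) ∈ W) (hφ : ∀ g, ‖φ g‖ ≤ K * ‖g‖)
    (g : H) : infDist (φ g) W ≤ dualApproxConst φ W * ‖g‖ := by
  have infDist_le (g : H) : infDist (φ g) W ≤ K * ‖g‖ :=
    (infDist_le_norm_of_zero_mem hW (φ g)).trans (hφ g)
  rcases eq_or_ne g 0 with rfl | hg
  · simpa only [norm_zero, mul_zero] using infDist_le 0
  have bddAbove_quotients :
      BddAbove {r : ℝ | ∃ g : H, g ≠ 0 ∧ r = (1 / ‖g‖) * infDist (φ g) W} := by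
    refine ⟨K, ?_⟩
    rintro _ ⟨g, hg, rfl⟩
    rw [one_div_mul_eq_div, div_le_iff₀ (norm_pos_iff.mpr hg)]
    exact infDist_le g
  rw [← div_le_iff₀ (norm_pos_iff.mpr hg), ← one_div_mul_eq_div]
  exact le_csSup bddAbove_quotients ⟨g, hg, rfl⟩

end DualApproximation

section Galerkin

theorem galerkin_orthogonality {R M N P : Type*} [CommRing R] [AddCommGroup M] [AddCommGroup N]
    [AddCommGroup P] [Module R M] [Module R N] [Module R P] {a : M →ₗ[R] N →ₗ[R] P} {F : N → P}
    {W : Set N} {u uh : M} (hu : ∀ w ∈ W, a u w = F w) (huh : ∀ w ∈ W, a uh w = F w) :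
    ∀ w ∈ W, a (u - uh) w = 0 := by
  intro w hw
  rw [map_sub, LinearMap.sub_apply, hu w hw, huh w hw, sub_self]

variable {U V H : Type*} [SeminormedAddCommGroup V] [NormedSpace ℝ V]

theorem apply_le_mul_infDist_of_forall_mem_eq_zero {f : V →ₗ[ℝ] ℝ} {C : ℝ} (hC : 0 ≤ C)
    (hf : ∀ v, f v ≤ C * ‖v‖) {W : Submodule ℝ V} (hW : ∀ w ∈ W, f w = 0) (z : V) :
    f z ≤ C * infDist z W := by
  rw [infDist_eq_iInf, Real.mul_iInf_of_nonneg hC]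
  refine le_ciInf fun w => ?_
  calc f z = f (z - w) := by rw [map_sub, hW w w.2, sub_zero]
    _ ≤ C * dist z w := by rw [dist_eq_norm]; exact hf _

theorem norm_le_opNorm_div_of_mul_sq_norm_le {f : V →L[ℝ] ℝ} {c : ℝ} (hc : 0 < c) {x : V}
    (hx : c * ‖x‖ ^ 2 ≤ f x) : ‖x‖ ≤ ‖f‖ / c := by
  rcases (norm_nonneg x).eq_or_lt with h_zero | h_pos
  · rw [← h_zero]
    positivity
  rw [le_div_iff₀' hc]
  refine le_of_mul_le_mul_right ?_ h_pos
  calc c * ‖x‖ * ‖x‖ = c * ‖x‖ ^ 2 := by ring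
    _ ≤ f x := hx
    _ ≤ ‖f‖ * ‖x‖ := (le_abs_self _).trans (f.le_opNorm x)

variable [NormedAddCommGroup H] [InnerProductSpace ℝ H]

theorem norm_dual_solution_le {ι : V →L[ℝ] H} {a : V →ₗ[ℝ] V →ₗ[ℝ] ℝ} {c : ℝ} (hc : 0 < c)
    (hcoer : ∀ v, c * ‖v‖ ^ 2 ≤ a v v) {g : H} {z : V}
    (hz : ∀ w, a w z = (inner ℝ g (ι w) : ℝ)) : ‖z‖ ≤ ‖ι‖ / c * ‖g‖ := by
  have energy_le : c * ‖z‖ ^ 2 ≤ (innerSL ℝ g ∘L ι) z := (hcoer z).trans_eq (hz z)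
  calc ‖z‖ ≤ ‖innerSL ℝ g ∘L ι‖ / c := norm_le_opNorm_div_of_mul_sq_norm_le hc energy_le
    _ ≤ ‖innerSL ℝ g‖ * ‖ι‖ / c := by gcongr; exact ContinuousLinearMap.opNorm_comp_le _ _
    _ = ‖ι‖ / c * ‖g‖ := by rw [innerSL_apply_norm]; ring

variable [SeminormedAddCommGroup U] [NormedSpace ℝ U]

theorem aubin_nitsche_general {ι : U →ₗ[ℝ] H} {a : U →ₗ[ℝ] V →ₗ[ℝ] ℝ} {C K : ℝ} (hC : 0 ≤ C)
    (hcont : ∀ v w, a v w ≤ C * ‖v‖ * ‖w‖) {W : Submodule ℝ V} {e : U}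
    (he : ∀ w ∈ W, a e w = 0) {φ : H → V} (hφ : ∀ g w, a w (φ g) = (inner ℝ g (ι w) : ℝ))
    (hφ_bound : ∀ g, ‖φ g‖ ≤ K * ‖g‖) :
    ‖ι e‖ ≤ C * ‖e‖ * dualApproxConst φ (W : Set V) := by
  have hCe : 0 ≤ C * ‖e‖ := by positivity
  have norm_mul_norm_le :
      ‖ι e‖ * ‖ι e‖ ≤ C * ‖e‖ * dualApproxConst φ (W : Set V) * ‖ι e‖ := by
    calc ‖ι e‖ * ‖ι e‖ = a e (φ (ι e)) := by rw [hφ, real_inner_self_eq_norm_mul_norm]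
      _ ≤ C * ‖e‖ * infDist (φ (ι e)) W :=
        apply_le_mul_infDist_of_forall_mem_eq_zero hCe (hcont e) he _
      _ ≤ C * ‖e‖ * (dualApproxConst φ (W : Set V) * ‖ι e‖) := by
        gcongr
        exact infDist_le_dualApproxConst_mul_norm W.zero_mem hφ_bound _
      _ = C * ‖e‖ * dualApproxConst φ (W : Set V) * ‖ι e‖ := by ring
  rcases (norm_nonneg (ι e)).eq_or_lt with h_zero | h_pos
  · rw [← h_zero]
    exact mul_nonneg hCe (dualApproxConst_nonneg φ W)
  · exact le_of_mul_le_mul_right norm_mul_norm_le h_pos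

end Galerkin

/-- **Aubin–Nitsche lemma.** Let `ι : V → H` be a continuous embedding of Hilbert
spaces, `u` the solution of the variational problem and `u_h` its Galerkin
approximation in `V_h`. For each `g ∈ H` let `φ g` solve the adjoint problem
`a(w, φ g) = ⟨g, ι w⟩_H` for all `w ∈ V`. Then
`‖ι(u − u_h)‖_H ≤ c₂ · ‖u − u_h‖_V · sup_{g ≠ 0} ( (1/‖g‖_H) · inf_{v_h ∈ V_h} ‖φ g − v_h‖_V )`. -/
theorem aubin_nitsche
    {V H : Type*} [NormedAddCommGroup V] [InnerProductSpace ℝ V] [CompleteSpace V]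
    [NormedAddCommGroup H] [InnerProductSpace ℝ H] [CompleteSpace H]
    (ι : V →L[ℝ] H) (hι : Function.Injective ι)
    (a : V →ₗ[ℝ] V →ₗ[ℝ] ℝ) (F : V →L[ℝ] ℝ)
    (c₁ c₂ : ℝ) (hc₁ : 0 < c₁) (hc₂ : 0 < c₂)
    (hcoer : ∀ v : V, c₁ * ‖v‖ ^ 2 ≤ a v v)
    (hcont : ∀ v w : V, a v w ≤ c₂ * ‖v‖ * ‖w‖)
    (Vh : Submodule ℝ V) (hVh : IsClosed (Vh : Set V))
    (u : V) (hu : ∀ v : V, a u v = F v)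
    (uh : Vh) (huh : ∀ vh : Vh, a (uh : V) (vh : V) = F (vh : V))
    (φ : H → V) (hφ : ∀ (g : H) (w : V), a w (φ g) = (inner ℝ g (ι w) : ℝ)) :
    ‖ι (u - (uh : V))‖ ≤ c₂ * ‖u - (uh : V)‖ *
      sSup {r : ℝ | ∃ g : H, g ≠ 0 ∧
        r = (1 / ‖g‖) * ⨅ vh : Vh, ‖φ g - (vh : V)‖} := by
  have orthogonality : ∀ w ∈ Vh, a (u - uh) w = 0 :=
    galerkin_orthogonality (W := Vh) (fun w _ => hu w) fun w hw => huh ⟨w, hw⟩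
  simpa only [dualApproxConst, infDist_eq_iInf, dist_eq_norm, SetLike.coe_sort_coe,
    ContinuousLinearMap.coe_coe] using
    aubin_nitsche_general (ι := ι.toLinearMap) hc₂.le hcont orthogonality hφ
      fun g => norm_dual_solution_le hc₁ hcoer (hφ g)
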